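/- (Corollary 3, biclustering.) Suppose Y = θ* + W ∈ ℝ^{n×m} where θ*_{ij} = Q*_{z₁*(i)z₂*(j)} for some Q* ∈ ℝ^{k*×l*}, z₁* ∈ [k*]^n, z₂* ∈ [l*]^m, and W is sub-Gaussian with parameter ρ. Then for any constants λ, ρ > 0 and any sufficiently small constant δ ∈ (0,1), there exists a constant D_{λ,δ,ρ} > 0 depending only on λ, δ, ρ such that for every D > D_{λ,δ,ρ} there exist constants M, C', C'' > 0 depending only on λ, δ, ρ, D with: E Π( kl + n log k + m log l > (1+δ)(k*l* + n log k* + m log l*) | Y ) ≤ exp(−C'(k*l* + n log k* + m log l*)) and E Π( Σ_{i,j}(θ_{ij} − θ*_{ij})² > M(k*l* + n log k* + m log l*) | Y ) ≤ exp(−C''(k*l* + n log k* + m log l*)). -/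

import Mathlib

open MeasureTheory Real Matrix
open scoped ENNReal Classical

/-- Euclidean norm of a finitely-indexed real vector. -/
noncomputable def enr {ι : Type*} [Fintype ι] (v : ι → ℝ) : ℝ :=
  Real.sqrt (∑ i, v i ^ 2)

/-- Euclidean inner product. -/
noncomputable def ipr {ι : Type*} [Fintype ι] (u v : ι → ℝ) : ℝ :=
  ∑ i, u i * v i

/-- Sub-Gaussian condition (2.2): `P(|⟨W,K⟩| > t) ≤ exp(-ρ t²/2)` for every unit vector `K`. -/
def subG {ι Ω : Type*} [Fintype ι] [MeasurableSpace Ω] (P : Measure Ω) (ρ : ℝ)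
    (W : Ω → ι → ℝ) : Prop :=
  ∀ K : ι → ℝ, enr K = 1 → ∀ t : ℝ, 0 < t →
    P {ω | t < |ipr (W ω) K|} ≤ ENNReal.ofReal (Real.exp (-ρ * t ^ 2 / 2))

/-- Determinant of the Gram matrix `AᵀA`. -/
noncomputable def gramDet {N κ : Type*} [Fintype N] [Fintype κ] [DecidableEq κ]
    (A : Matrix N κ ℝ) : ℝ := (Aᵀ * A).det

/-- Generic posterior probability for a structured linear model.
`ι` indexes the models (structures), `κ i` the coordinates of the parameter of model `i`,
`A i` is the matrix of the linear operator `𝒳` of model `i`, `w i` the model-selection prior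
weight (with the Gamma-correction already cancelled against the Laplace normalizing constant),
`emb i` maps a parameter to the object the posterior statement is about, `Y` is the data,
`Sel` restricts the model index and `U` the embedded parameter. -/
noncomputable def gpostP {Θ N ι : Type*} [Fintype N] [Fintype ι]
    {κ : ι → Type*} [∀ i, Fintype (κ i)] [∀ i, DecidableEq (κ i)]
    (w : ι → ℝ) (A : (i : ι) → Matrix N (κ i) ℝ)
    (emb : (i : ι) → (κ i → ℝ) → Θ) (lam : ℝ) (Y : N → ℝ)
    (Sel : Set ι) (U : Set Θ) : ℝ :=
  (∑ i : ι, (if i ∈ Sel then w i else 0) * Real.sqrt (gramDet (A i)) *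
      (lam / Real.sqrt π) ^ Fintype.card (κ i) *
      ∫ Q in {Q : κ i → ℝ | emb i Q ∈ U},
        Real.exp (-(1/2) * (enr fun t => Y t - (A i).mulVec Q t) ^ 2
          - lam * enr ((A i).mulVec Q))) /
  (∑ i : ι, w i * Real.sqrt (gramDet (A i)) *
      (lam / Real.sqrt π) ^ Fintype.card (κ i) *
      ∫ Q : κ i → ℝ,
        Real.exp (-(1/2) * (enr fun t => Y t - (A i).mulVec Q t) ^ 2
          - lam * enr ((A i).mulVec Q)))

/-- The design matrix of the biclustering model: it maps `Q ∈ ℝ^{k×l}` to the array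
`(Q_{z₁(i)z₂(j)})_{(i,j)}`. -/
noncomputable def bicX (n m k l : ℕ) (z₁ : Fin n → Fin k) (z₂ : Fin m → Fin l) :
    Matrix (Fin n × Fin m) (Fin k × Fin l) ℝ :=
  fun p q => if z₁ p.1 = q.1 ∧ z₂ p.2 = q.2 then 1 else 0

/-- The posterior distribution for the biclustering prior: `(k,l)` is sampled with weight
proportional to `(Γ(kl)/Γ(kl/2)) exp(-D(kl + n log k + m log l))`, `(z₁,z₂)` uniformly
from `[k]^n × [l]^m`, `Q` from the elliptical Laplace density
`∝ exp(-λ√(Σ_{ij} Q_{z₁(i)z₂(j)}²))`, and the Gaussian pseudo-likelihood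
`∝ exp(-½Σ_{ij}(Y_{ij} - θ_{ij})²)` is used; `K` restricts `(k,l)` and `U` restricts the
signal matrix `θ`.  (The Gamma correction factor has been cancelled.) -/
noncomputable def bicPost (n m : ℕ) (D lam : ℝ) (Y : Fin n × Fin m → ℝ)
    (K : Set (ℕ × ℕ)) (U : Set (Fin n → Fin m → ℝ)) : ℝ :=
  gpostP
    (fun i : Σ kl : Fin n × Fin m,
        ((Fin n → Fin ((kl.1 : ℕ) + 1)) × (Fin m → Fin ((kl.2 : ℕ) + 1))) =>
      Real.exp (-D * ((((i.1.1 : ℕ) + 1 : ℕ) : ℝ) * (((i.1.2 : ℕ) + 1 : ℕ) : ℝ)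
          + (n : ℝ) * Real.log (((i.1.1 : ℕ) + 1 : ℕ))
          + (m : ℝ) * Real.log (((i.1.2 : ℕ) + 1 : ℕ)))) *
        ((((i.1.1 : ℕ) + 1 : ℕ) : ℝ) ^ n * (((i.1.2 : ℕ) + 1 : ℕ) : ℝ) ^ m)⁻¹)
    (fun i => bicX n m ((i.1.1 : ℕ) + 1) ((i.1.2 : ℕ) + 1) i.2.1 i.2.2)
    (fun i Q => fun a b => Q (i.2.1 a, i.2.2 b))
    lam Y
    {i | (((i.1.1 : ℕ) + 1), ((i.1.2 : ℕ) + 1)) ∈ K} U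

/-!
In each model the prior normalisation `√(det (AᵀA)) (λ / √π) ^ d` cancels the Gaussian integrals
over the parameter, up to a factor exponential in the dimension `d`. So the marginal likelihood of a
model, relative to the density of the data at the true signal `θ`, is controlled from both sides.
From below, in the true model stripped of its empty clusters, symmetrising around the true parameter
removes the noise. From above, the noise has inner product at most `√(K (x + s)) ‖ϑ - θ‖` with all
deviations `ϑ - θ` in models of complexity `x`, where `s` is the true rate: this follows from a net
of `5 ^ (d + 1)` directions and a union bound, and leaves a Gaussian factor in the distance of `ϑ`
to the least squares solution. The factor `exp (-D x)` of the prior pays for the dimension, the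
noise and the union over all models once `D` is large, which turns an excess of complexity or of
loss into posterior mass at most `exp (-2 s)`.
-/

section EuclideanNorm

variable {N : Type*} [Fintype N]

lemma enr_eq_norm_toLp (v : N → ℝ) : enr v = ‖WithLp.toLp 2 v‖ := by
  simp [enr, EuclideanSpace.norm_eq]

lemma ipr_eq_inner_toLp (u v : N → ℝ) :
    ipr u v = inner ℝ (WithLp.toLp 2 u) (WithLp.toLp 2 v) := by
  simp [ipr, PiLp.inner_apply, mul_comm]

lemma enr_nonneg (v : N → ℝ) : 0 ≤ enr v := Real.sqrt_nonneg _

lemma enr_sq (v : N → ℝ) : enr v ^ 2 = ∑ i, v i ^ 2 :=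
  Real.sq_sqrt (Finset.sum_nonneg fun _ _ => sq_nonneg _)

lemma enr_add_le (u v : N → ℝ) : enr (u + v) ≤ enr u + enr v := by
  simpa only [enr_eq_norm_toLp, WithLp.toLp_add] using norm_add_le _ _

lemma enr_sub_le (u v : N → ℝ) : enr (u - v) ≤ enr u + enr v := by
  simpa only [enr_eq_norm_toLp, WithLp.toLp_sub] using norm_sub_le _ _

lemma enr_sub_sq (u v : N → ℝ) : enr (u - v) ^ 2 = enr u ^ 2 - 2 * ipr u v + enr v ^ 2 := by
  simpa only [enr_eq_norm_toLp, ipr_eq_inner_toLp, WithLp.toLp_sub] using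
    norm_sub_sq_real (WithLp.toLp 2 u) (WithLp.toLp 2 v)

lemma enr_add_sq (u v : N → ℝ) : enr (u + v) ^ 2 = enr u ^ 2 + 2 * ipr u v + enr v ^ 2 := by
  simpa only [enr_eq_norm_toLp, ipr_eq_inner_toLp, WithLp.toLp_add] using
    norm_add_sq_real (WithLp.toLp 2 u) (WithLp.toLp 2 v)

@[fun_prop]
lemma continuous_enr : Continuous (enr : (N → ℝ) → ℝ) := by
  unfold enr
  fun_prop

end EuclideanNorm

section GaussianIntegral

variable {N κ : Type*} [Fintype N] [Fintype κ]

lemma enr_mulVec_sq (A : Matrix N κ ℝ) (Q : κ → ℝ) :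
    enr (A *ᵥ Q) ^ 2 = Q ⬝ᵥ ((Aᵀ * A) *ᵥ Q) := by
  rw [enr_sq, ← Matrix.mulVec_mulVec, Matrix.dotProduct_mulVec, Matrix.vecMul_transpose, dotProduct]
  exact Finset.sum_congr rfl fun i _ => sq _

-- Least squares: `A *ᵥ c` is the orthogonal projection of `θ` onto the range of `A`.
lemma exists_forall_enr_mulVec_sub_le (A : Matrix N κ ℝ) (θ : N → ℝ) :
    ∃ c, ∀ Q, enr (A *ᵥ (Q - c)) ≤ enr (A *ᵥ Q - θ) := by
  let S := LinearMap.range (Matrix.toEuclideanLin A)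
  have hS : ∀ Q, WithLp.toLp 2 (A *ᵥ Q) ∈ S := fun Q => ⟨WithLp.toLp 2 Q, rfl⟩
  obtain ⟨c, hc⟩ := S.starProjection_apply_mem (WithLp.toLp 2 θ)
  refine ⟨c.ofLp, fun Q => ?_⟩
  rw [enr_eq_norm_toLp, enr_eq_norm_toLp]
  have hproj : S.starProjection (WithLp.toLp 2 (A *ᵥ Q - θ)) =
      WithLp.toLp 2 (A *ᵥ (Q - c.ofLp)) := by
    rw [WithLp.toLp_sub, map_sub, Submodule.starProjection_eq_self_iff.mpr (hS Q), ← hc,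
      Matrix.mulVec_sub, WithLp.toLp_sub]
    rfl
  rw [← hproj]
  exact S.norm_starProjection_apply_le _

variable [DecidableEq κ] {A : Matrix N κ ℝ}

lemma gramDet_nonneg (A : Matrix N κ ℝ) : 0 ≤ gramDet A := by
  simpa only [gramDet, Matrix.conjTranspose_eq_transpose_of_trivial] using
    (Matrix.posSemidef_conjTranspose_mul_self A).det_nonneg

lemma gramDet_pos_of_injective (hA : Function.Injective A.mulVec) : 0 < gramDet A := by
  simpa only [gramDet, Matrix.conjTranspose_eq_transpose_of_trivial] using
    (Matrix.PosDef.conjTranspose_mul_self A hA).det_pos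

lemma exists_abs_det_eq_sqrt_gramDet (A : Matrix N κ ℝ) :
    ∃ B : Matrix κ κ ℝ, |B.det| = √(gramDet A) ∧ ∀ Q, enr (B *ᵥ Q) = enr (A *ᵥ Q) := by
  obtain ⟨B, hB⟩ : ∃ B : Matrix κ κ ℝ, Aᵀ * A = Bᵀ * B := by
    open scoped MatrixOrder in
    simpa only [Matrix.star_eq_conjTranspose, Matrix.conjTranspose_eq_transpose_of_trivial] using
      CStarAlgebra.nonneg_iff_eq_star_mul_self.mp
        (Matrix.posSemidef_conjTranspose_mul_self A).nonneg
  refine ⟨B, ?_, fun Q => ?_⟩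
  · rw [gramDet, hB, Matrix.det_mul, Matrix.det_transpose, Real.sqrt_mul_self_eq_abs]
  · rw [← Real.sqrt_sq (enr_nonneg (B *ᵥ Q)), ← Real.sqrt_sq (enr_nonneg (A *ᵥ Q)),
      enr_mulVec_sq, enr_mulVec_sq, hB]

lemma integral_comp_mulVec {B : Matrix κ κ ℝ} (hB : B.det ≠ 0) (f : (κ → ℝ) → ℝ) :
    |B.det| * ∫ Q, f (B *ᵥ Q) = ∫ Q, f Q := by
  have hemb : MeasurableEmbedding (Matrix.toLin' B) :=
    (LinearMap.isClosedEmbedding_of_injective <| LinearMap.ker_eq_bot.mpr <|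
      Matrix.mulVec_injective_of_isUnit <|
        B.isUnit_iff_isUnit_det.mpr hB.isUnit).measurableEmbedding
  have h := hemb.integral_map (μ := volume) f
  rw [Real.map_matrix_volume_pi_eq_smul_volume_pi hB, integral_smul_measure,
    ENNReal.toReal_ofReal (abs_nonneg _), smul_eq_mul, abs_inv] at h
  simp only [Matrix.toLin'_apply] at h
  rw [← h, mul_inv_cancel_left₀ (abs_ne_zero.mpr hB)]

lemma integral_exp_neg_mul_enr_sq (κ : Type*) [Fintype κ] (b : ℝ) :
    ∫ Q : κ → ℝ, Real.exp (-b * enr Q ^ 2) = √(π / b) ^ Fintype.card κ := by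
  simp only [enr_sq, Finset.mul_sum, Real.exp_sum]
  rw [integral_fintype_prod_volume_eq_pow fun x : ℝ => Real.exp (-b * x ^ 2), integral_gaussian]

lemma sqrt_gramDet_mul_integral_exp_neg_mul_enr_mulVec_sq (hA : 0 < gramDet A) (b : ℝ)
    (c : κ → ℝ) :
    √(gramDet A) * ∫ Q, Real.exp (-b * enr (A *ᵥ (Q - c)) ^ 2) = √(π / b) ^ Fintype.card κ := by
  obtain ⟨B, hdet, hnorm⟩ := exists_abs_det_eq_sqrt_gramDet A
  have hB : B.det ≠ 0 := by
    rw [← abs_ne_zero, hdet]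
    exact (Real.sqrt_pos.mpr hA).ne'
  rw [integral_sub_right_eq_self (fun Q => Real.exp (-b * enr (A *ᵥ Q) ^ 2)) c,
    ← integral_exp_neg_mul_enr_sq κ b,
    ← integral_comp_mulVec hB fun Q => Real.exp (-b * enr Q ^ 2), hdet]
  simp only [hnorm]

lemma integrable_exp_neg_mul_enr_mulVec_sq (hA : 0 < gramDet A) {b : ℝ} (hb : 0 < b) (c : κ → ℝ) :
    Integrable fun Q : κ → ℝ => Real.exp (-b * enr (A *ᵥ (Q - c)) ^ 2) := by
  refine Integrable.of_integral_ne_zero fun h => ?_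
  have h' := sqrt_gramDet_mul_integral_exp_neg_mul_enr_mulVec_sq hA b c
  rw [h, mul_zero] at h'
  have : 0 < √(π / b) := by positivity
  exact (pow_pos this _).ne h'

end GaussianIntegral

section Noise

lemma packingNumber_sphere_le (E : Type*) [NormedAddCommGroup E] [NormedSpace ℝ E]
    [FiniteDimensional ℝ E] :
    Metric.packingNumber 1 (Metric.sphere (0 : E) 2) ≤ (5 ^ Module.finrank ℝ E : ℕ) := by
  refine iSup₂_le fun C hC => iSup_le fun hsep => ?_
  by_contra! hlt
  obtain ⟨t, htC, htcard⟩ := Set.exists_subset_encard_eq (Order.add_one_le_of_lt hlt)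
  obtain ⟨t, rfl⟩ := (Set.finite_of_encard_eq_coe htcard).exists_finset_coe
  have hle := Besicovitch.card_le_of_separated t
    (fun c hc => (mem_sphere_zero_iff_norm.mp (hC (htC hc))).le)
    (fun c hc d hd hcd => by
      have h : 1 < edist c d := hsep (htC hc) (htC hd) hcd
      rw [edist_dist, dist_eq_norm] at h
      exact (ENNReal.one_lt_ofReal.mp h).le)
  rw [Set.encard_coe_eq_coe_finsetCard] at htcard
  norm_cast at htcard
  omega

lemma exists_finset_half_norm_le_inner (E : Type*) [NormedAddCommGroup E] [InnerProductSpace ℝ E]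
    [FiniteDimensional ℝ E] :
    ∃ s : Finset E, s.card ≤ 5 ^ Module.finrank ℝ E ∧ (∀ c ∈ s, ‖c‖ = 1) ∧
      ∀ w : E, w ≠ 0 → ∃ c ∈ s, ‖w‖ / 2 ≤ inner ℝ w c := by
  have hpack := packingNumber_sphere_le E
  have hfin : Metric.packingNumber 1 (Metric.sphere (0 : E) 2) ≠ ⊤ :=
    ne_top_of_le_ne_top (ENat.natCast_ne_top _) hpack
  obtain ⟨C, hCsub, hCfin, hCcover, hCcard⟩ := Metric.exists_set_encard_eq_coveringNumber
    (ne_top_of_le_ne_top hfin (Metric.coveringNumber_le_packingNumber _ _))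
  have hcard : hCfin.toFinset.card ≤ 5 ^ Module.finrank ℝ E := by
    rw [← ENat.natCast_le_natCast, ← Set.encard_coe_eq_coe_finsetCard, hCfin.coe_toFinset, hCcard]
    exact (Metric.coveringNumber_le_packingNumber _ _).trans hpack
  refine ⟨hCfin.toFinset.image ((1 / 2 : ℝ) • ·), Finset.card_image_le.trans hcard, ?_, ?_⟩
  · simp only [Finset.forall_mem_image, hCfin.mem_toFinset]
    intro c hc
    rw [norm_smul, mem_sphere_zero_iff_norm.mp (hCsub hc)]
    norm_num
  · intro w hw
    have hw' : ‖w‖ ≠ 0 := norm_ne_zero_iff.mpr hw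
    obtain ⟨c, hc, hwc⟩ := hCcover (x := (2 / ‖w‖) • w) <| by
      rw [mem_sphere_zero_iff_norm, norm_smul, norm_div, norm_norm, div_mul_cancel₀ _ hw',
        Real.norm_two]
    have hdist : ‖(2 / ‖w‖) • w - c‖ ≤ 1 := by
      rw [← dist_eq_norm, ← ENNReal.ofReal_le_one, ← edist_dist]
      exact hwc
    refine ⟨_, Finset.mem_image_of_mem _ (hCfin.mem_toFinset.mpr hc), ?_⟩
    have hcs : inner ℝ w ((2 / ‖w‖) • w - c) ≤ ‖w‖ :=
      (real_inner_le_norm _ _).trans (mul_le_of_le_one_right (norm_nonneg w) hdist)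
    have hself : inner ℝ w ((2 / ‖w‖) • w) = 2 * ‖w‖ := by
      rw [real_inner_smul_right, real_inner_self_eq_norm_sq]
      field_simp
    rw [inner_sub_right, hself] at hcs
    rw [real_inner_smul_right]
    linarith

variable {N Ω : Type*} [Fintype N] [MeasurableSpace Ω]

lemma subG.measure_exists_mem_submodule_le {P : Measure Ω} {ρ : ℝ} {W : Ω → N → ℝ}
    (hW : subG P ρ W) (S : Submodule ℝ (EuclideanSpace ℝ N)) {T : ℝ} (hT : 0 < T) :
    P {ω | ∃ u, WithLp.toLp 2 u ∈ S ∧ T * enr u < ipr (W ω) u} ≤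
      5 ^ Module.finrank ℝ S * ENNReal.ofReal (Real.exp (-ρ * T ^ 2 / 8)) := by
  obtain ⟨s, hcard, hnorm, hnet⟩ := exists_finset_half_norm_le_inner S
  have hsub : {ω | ∃ u, WithLp.toLp 2 u ∈ S ∧ T * enr u < ipr (W ω) u} ⊆
      ⋃ c ∈ s, {ω | T / 2 < |ipr (W ω) (c : EuclideanSpace ℝ N).ofLp|} := by
    rintro ω ⟨u, huS, hu⟩
    set w : S := S.orthogonalProjectionOnto (WithLp.toLp 2 (W ω))
    have hproj (v : S) : ipr (W ω) (v : EuclideanSpace ℝ N).ofLp = inner ℝ w v := by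
      rw [ipr_eq_inner_toLp]
      exact (Submodule.inner_orthogonalProjectionOnto_eq_of_mem_right v _).symm
    have hTw : T < ‖w‖ := by
      have hle : ipr (W ω) u ≤ ‖w‖ * enr u := by
        rw [hproj ⟨_, huS⟩, enr_eq_norm_toLp]
        exact real_inner_le_norm w ⟨WithLp.toLp 2 u, huS⟩
      exact lt_of_mul_lt_mul_right (hu.trans_le hle) (enr_nonneg u)
    obtain ⟨c, hcs, hc⟩ := hnet w (norm_pos_iff.mp (hT.trans hTw))
    rw [Set.mem_iUnion₂]
    refine ⟨c, hcs, ?_⟩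
    rw [Set.mem_ofPred_eq, hproj]
    exact lt_of_lt_of_le (by linarith) (le_abs_self _)
  have htail (c) (hc : c ∈ s) : P {ω | T / 2 < |ipr (W ω) (c : EuclideanSpace ℝ N).ofLp|} ≤
      ENNReal.ofReal (Real.exp (-ρ * T ^ 2 / 8)) := by
    refine (hW _ ?_ (T / 2) (half_pos hT)).trans_eq (by ring_nf)
    rw [enr_eq_norm_toLp]
    exact hnorm c hc
  calc P {ω | ∃ u, WithLp.toLp 2 u ∈ S ∧ T * enr u < ipr (W ω) u}
      ≤ ∑ c ∈ s, P {ω | T / 2 < |ipr (W ω) (c : EuclideanSpace ℝ N).ofLp|} :=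
        (measure_mono hsub).trans (measure_biUnion_finset_le _ _)
    _ ≤ s.card • ENNReal.ofReal (Real.exp (-ρ * T ^ 2 / 8)) := Finset.sum_le_card_nsmul _ _ _ htail
    _ ≤ 5 ^ Module.finrank ℝ S * ENNReal.ofReal (Real.exp (-ρ * T ^ 2 / 8)) := by
        rw [nsmul_eq_mul]
        gcongr
        exact_mod_cast hcard

lemma integral_le_measureReal_add (P : Measure Ω) [IsProbabilityMeasure P] {f : Ω → ℝ} {B : Set Ω}
    {ε : ℝ} (hε : 0 ≤ ε) (hf₀ : ∀ ω, 0 ≤ f ω) (hf₁ : ∀ ω, f ω ≤ 1) (hf : ∀ ω ∉ B, f ω ≤ ε) :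
    ∫ ω, f ω ∂P ≤ P.real B + ε := by
  have hB := measurableSet_toMeasurable P B
  have hind : Integrable ((toMeasurable P B).indicator fun _ => (1 : ℝ)) P :=
    (integrable_const 1).indicator hB
  have hle (ω) : f ω ≤ (toMeasurable P B).indicator (fun _ => 1) ω + ε := by
    by_cases hω : ω ∈ toMeasurable P B
    · rw [Set.indicator_of_mem hω]
      linarith [hf₁ ω]
    · rw [Set.indicator_of_notMem hω, zero_add]
      exact hf ω fun h => hω (subset_toMeasurable P B h)
  calc ∫ ω, f ω ∂P ≤ ∫ ω, ((toMeasurable P B).indicator (fun _ => 1) ω + ε) ∂P :=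
        integral_mono_of_nonneg (.of_forall hf₀) (hind.add (integrable_const ε)) (.of_forall hle)
    _ = P.real B + ε := by
        rw [integral_add hind (integrable_const ε), integral_indicator_const _ hB, integral_const]
        simp [Measure.real]

end Noise

section Evidence

variable {N : Type*} [Fintype N]

/-- The unnormalised posterior density of the signal `θ` given the data `Y`: the Gaussian
pseudo-likelihood times the elliptical Laplace prior. -/
noncomputable def sigDensity (lam : ℝ) (Y θ : N → ℝ) : ℝ :=
  Real.exp (-(1 / 2) * enr (Y - θ) ^ 2 - lam * enr θ)

lemma sigDensity_pos (lam : ℝ) (Y θ : N → ℝ) : 0 < sigDensity lam Y θ := Real.exp_pos _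

@[fun_prop]
lemma continuous_sigDensity (lam : ℝ) (Y : N → ℝ) : Continuous (sigDensity lam Y) := by
  unfold sigDensity
  fun_prop

lemma sigDensity_le {lam T : ℝ} (hlam : 0 ≤ lam) {Y θ ϑ : N → ℝ}
    (hT : ipr (Y - θ) (ϑ - θ) ≤ T * enr (ϑ - θ)) :
    sigDensity lam Y ϑ ≤
      sigDensity lam Y θ * Real.exp (2 * T ^ 2 + 2 * lam ^ 2 - enr (ϑ - θ) ^ 2 / 4) := by
  rw [sigDensity, sigDensity, ← Real.exp_add, Real.exp_le_exp]
  have hsq : enr (Y - ϑ) ^ 2 =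
      enr (Y - θ) ^ 2 - 2 * ipr (Y - θ) (ϑ - θ) + enr (ϑ - θ) ^ 2 := by
    rw [← enr_sub_sq, sub_sub_sub_cancel_right]
  have htri : enr θ ≤ enr ϑ + enr (ϑ - θ) := by
    simpa only [sub_sub_cancel] using enr_sub_le ϑ (ϑ - θ)
  nlinarith [mul_le_mul_of_nonneg_left htri hlam, sq_nonneg (enr (ϑ - θ) - 4 * T),
    sq_nonneg (enr (ϑ - θ) - 4 * lam)]

lemma two_mul_exp_add_div_two_le (a b : ℝ) :
    2 * Real.exp ((a + b) / 2) ≤ Real.exp a + Real.exp b := by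
  have h := two_mul_le_add_sq (Real.exp (a / 2)) (Real.exp (b / 2))
  rwa [mul_assoc, ← Real.exp_add, ← Real.exp_nat_mul, ← Real.exp_nat_mul, Nat.cast_ofNat,
    mul_div_cancel₀ _ two_ne_zero, mul_div_cancel₀ _ two_ne_zero, ← add_div] at h

-- Symmetrising in `v` cancels the noise term `ipr (Y - θ) v`, so no noise bound is needed here.
lemma two_mul_sigDensity_mul_exp_le {lam : ℝ} (hlam : 0 ≤ lam) (Y θ v : N → ℝ) :
    2 * (sigDensity lam Y θ * Real.exp (-(lam ^ 2 / 2) - enr v ^ 2)) ≤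
      sigDensity lam Y (θ + v) + sigDensity lam Y (θ - v) := by
  refine le_trans ?_ (two_mul_exp_add_div_two_le _ _)
  rw [sigDensity, ← Real.exp_add]
  gcongr
  have hadd : enr (Y - (θ + v)) ^ 2 = enr (Y - θ) ^ 2 - 2 * ipr (Y - θ) v + enr v ^ 2 := by
    rw [← sub_sub, enr_sub_sq]
  have hsub : enr (Y - (θ - v)) ^ 2 = enr (Y - θ) ^ 2 + 2 * ipr (Y - θ) v + enr v ^ 2 := by
    rw [← sub_add, enr_add_sq]
  nlinarith [mul_le_mul_of_nonneg_left (enr_add_le θ v) hlam,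
    mul_le_mul_of_nonneg_left (enr_sub_le θ v) hlam, sq_nonneg (enr v - lam)]

variable {κ : Type*} [Fintype κ] [DecidableEq κ]

/-- The contribution of the parameters in `S` of a model with design `A` to the marginal
likelihood of `Y`, up to the normalisation common to all models. -/
noncomputable def evidence (A : Matrix N κ ℝ) (lam : ℝ) (Y : N → ℝ) (S : Set (κ → ℝ)) : ℝ :=
  √(gramDet A) * (lam / √π) ^ Fintype.card κ * ∫ Q in S, sigDensity lam Y (A *ᵥ Q)

variable {A : Matrix N κ ℝ} {lam : ℝ}

lemma integrable_sigDensity_mulVec (hA : 0 < gramDet A) (hlam : 0 ≤ lam) (Y : N → ℝ) :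
    Integrable fun Q => sigDensity lam Y (A *ᵥ Q) := by
  obtain ⟨c, hc⟩ := exists_forall_enr_mulVec_sub_le A Y
  refine (integrable_exp_neg_mul_enr_mulVec_sq hA one_half_pos c).mono'
    (by fun_prop) (.of_forall fun Q => ?_)
  rw [Real.norm_of_nonneg (sigDensity_pos _ _ _).le, sigDensity, Real.exp_le_exp]
  have hle : enr (A *ᵥ (Q - c)) ≤ enr (Y - A *ᵥ Q) := by
    simpa only [enr_eq_norm_toLp, WithLp.toLp_sub, norm_sub_rev (WithLp.toLp 2 Y)] using hc Q
  nlinarith [pow_le_pow_left₀ (enr_nonneg _) hle 2, mul_nonneg hlam (enr_nonneg (A *ᵥ Q))]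

lemma evidence_nonneg (hlam : 0 ≤ lam) (A : Matrix N κ ℝ) (Y : N → ℝ) (S : Set (κ → ℝ)) :
    0 ≤ evidence A lam Y S :=
  mul_nonneg (by positivity) (integral_nonneg fun _ => (sigDensity_pos _ _ _).le)

lemma evidence_of_gramDet_eq_zero (hA : gramDet A = 0) (lam : ℝ) (Y : N → ℝ) (S : Set (κ → ℝ)) :
    evidence A lam Y S = 0 := by
  rw [evidence, hA, Real.sqrt_zero, zero_mul, zero_mul]

lemma evidence_le_evidence_univ (hlam : 0 ≤ lam) (A : Matrix N κ ℝ) (Y : N → ℝ)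
    (S : Set (κ → ℝ)) : evidence A lam Y S ≤ evidence A lam Y Set.univ := by
  rcases (gramDet_nonneg A).eq_or_lt' with hA | hA
  · rw [evidence_of_gramDet_eq_zero hA, evidence_of_gramDet_eq_zero hA]
  · refine mul_le_mul_of_nonneg_left ?_ (by positivity)
    rw [setIntegral_univ]
    exact setIntegral_le_integral (integrable_sigDensity_mulVec hA hlam Y)
      (.of_forall fun _ => (sigDensity_pos _ _ _).le)

lemma normalisation_mul_integral_exp_neg_mul_enr_mulVec_sq (hA : 0 < gramDet A) (lam : ℝ) {b : ℝ}
    (hb : 0 ≤ b) (c : κ → ℝ) :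
    √(gramDet A) * (lam / √π) ^ Fintype.card κ * ∫ Q, Real.exp (-b * enr (A *ᵥ (Q - c)) ^ 2) =
      (lam / √b) ^ Fintype.card κ := by
  rw [mul_right_comm, sqrt_gramDet_mul_integral_exp_neg_mul_enr_mulVec_sq hA b c, ← mul_pow,
    Real.sqrt_div' _ hb]
  have hπ : √π ≠ 0 := (Real.sqrt_pos.mpr Real.pi_pos).ne'
  field_simp

lemma sigDensity_mul_integral_exp_le (hA : 0 < gramDet A) (hlam : 0 ≤ lam) (Y : N → ℝ)
    (Q₀ : κ → ℝ) :
    sigDensity lam Y (A *ᵥ Q₀) * Real.exp (-(lam ^ 2 / 2)) *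
      ∫ Q, Real.exp (-1 * enr (A *ᵥ (Q - 0)) ^ 2) ≤ ∫ Q, sigDensity lam Y (A *ᵥ Q) := by
  set c := sigDensity lam Y (A *ᵥ Q₀) * Real.exp (-(lam ^ 2 / 2))
  have hc : 0 ≤ c := mul_nonneg (sigDensity_pos _ _ _).le (Real.exp_pos _).le
  have hint := integrable_sigDensity_mulVec hA hlam Y
  have hpt (Q : κ → ℝ) : 2 * (c * Real.exp (-1 * enr (A *ᵥ (Q - 0)) ^ 2)) ≤
      sigDensity lam Y (A *ᵥ (Q₀ + Q)) + sigDensity lam Y (A *ᵥ (Q₀ - Q)) := by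
    rw [sub_zero, neg_one_mul, mul_assoc, ← Real.exp_add, ← sub_eq_add_neg, Matrix.mulVec_add,
      Matrix.mulVec_sub]
    exact two_mul_sigDensity_mul_exp_le hlam Y (A *ᵥ Q₀) (A *ᵥ Q)
  have hmono := integral_mono_of_nonneg (.of_forall fun Q => by positivity)
    ((hint.comp_add_left Q₀).add (hint.comp_sub_left Q₀)) (.of_forall hpt)
  rw [integral_add' (hint.comp_add_left Q₀) (hint.comp_sub_left Q₀),
    integral_add_left_eq_self (fun Q => sigDensity lam Y (A *ᵥ Q)),
    integral_sub_left_eq_self (fun Q => sigDensity lam Y (A *ᵥ Q)), ← two_mul,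
    integral_const_mul, integral_const_mul] at hmono
  exact le_of_mul_le_mul_left hmono two_pos

lemma exp_neg_inv_le {x : ℝ} (hx : 0 < x) : Real.exp (-x⁻¹) ≤ x := by
  rw [Real.exp_neg]
  exact inv_le_of_inv_le₀ hx ((le_add_of_nonneg_right zero_le_one).trans (Real.add_one_le_exp _))

lemma le_evidence (hA : 0 < gramDet A) (hlam : 0 < lam) (Y : N → ℝ) (Q₀ : κ → ℝ) :
    sigDensity lam Y (A *ᵥ Q₀) * Real.exp (-(lam ^ 2 / 2) - Fintype.card κ / lam) ≤
      evidence A lam Y Set.univ := by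
  set d := Fintype.card κ
  have hpow : Real.exp (-(d / lam)) ≤ (lam / √1) ^ d := by
    rw [Real.sqrt_one, div_one, div_eq_mul_inv, ← mul_neg, Real.exp_nat_mul]
    exact pow_le_pow_left₀ (Real.exp_pos _).le (exp_neg_inv_le hlam) d
  have hσ := sigDensity_pos lam Y (A *ᵥ Q₀)
  calc sigDensity lam Y (A *ᵥ Q₀) * Real.exp (-(lam ^ 2 / 2) - d / lam)
      = sigDensity lam Y (A *ᵥ Q₀) * Real.exp (-(lam ^ 2 / 2)) * Real.exp (-(d / lam)) := by
        rw [sub_eq_add_neg, Real.exp_add, mul_assoc]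
    _ ≤ sigDensity lam Y (A *ᵥ Q₀) * Real.exp (-(lam ^ 2 / 2)) * (lam / √1) ^ d := by gcongr
    _ = √(gramDet A) * (lam / √π) ^ d * (sigDensity lam Y (A *ᵥ Q₀) * Real.exp (-(lam ^ 2 / 2)) *
          ∫ Q, Real.exp (-1 * enr (A *ᵥ (Q - 0)) ^ 2)) := by
        rw [← normalisation_mul_integral_exp_neg_mul_enr_mulVec_sq hA lam zero_le_one 0,
          mul_left_comm]
    _ ≤ evidence A lam Y Set.univ := by
        rw [evidence, setIntegral_univ]
        gcongr
        exact sigDensity_mul_integral_exp_le hA hlam.le Y Q₀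

lemma setIntegral_sigDensity_le (hA : 0 < gramDet A) (hlam : 0 ≤ lam) {Y θ : N → ℝ}
    {S : Set (κ → ℝ)} (hS : MeasurableSet S) {T R : ℝ}
    (hT : ∀ Q, ipr (Y - θ) (A *ᵥ Q - θ) ≤ T * enr (A *ᵥ Q - θ))
    (hR : ∀ Q ∈ S, R ≤ enr (A *ᵥ Q - θ) ^ 2) :
    ∃ c, ∫ Q in S, sigDensity lam Y (A *ᵥ Q) ≤
      sigDensity lam Y θ * Real.exp (2 * T ^ 2 + 2 * lam ^ 2 - R / 8) *
        ∫ Q, Real.exp (-(1 / 8) * enr (A *ᵥ (Q - c)) ^ 2) := by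
  obtain ⟨c, hc⟩ := exists_forall_enr_mulVec_sub_le A θ
  refine ⟨c, ?_⟩
  set C := sigDensity lam Y θ * Real.exp (2 * T ^ 2 + 2 * lam ^ 2 - R / 8)
  have hC : 0 ≤ C := mul_nonneg (sigDensity_pos _ _ _).le (Real.exp_pos _).le
  have hpt : ∀ Q ∈ S, sigDensity lam Y (A *ᵥ Q) ≤
      C * Real.exp (-(1 / 8) * enr (A *ᵥ (Q - c)) ^ 2) := fun Q hQ => by
    refine (sigDensity_le hlam (hT Q)).trans ?_
    rw [mul_assoc, ← Real.exp_add]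
    refine mul_le_mul_of_nonneg_left (Real.exp_le_exp.mpr ?_) (sigDensity_pos _ _ _).le
    linarith [hR Q hQ, pow_le_pow_left₀ (enr_nonneg _) (hc Q) 2]
  have hgauss : Integrable fun Q => C * Real.exp (-(1 / 8) * enr (A *ᵥ (Q - c)) ^ 2) :=
    (integrable_exp_neg_mul_enr_mulVec_sq hA (by norm_num) c).const_mul C
  rw [← integral_const_mul]
  exact (setIntegral_mono_on (integrable_sigDensity_mulVec hA hlam Y).integrableOn
    hgauss.integrableOn hS hpt).trans
      (setIntegral_le_integral hgauss (.of_forall fun _ => by positivity))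

lemma evidence_le (hlam : 0 ≤ lam) {Y θ : N → ℝ} {S : Set (κ → ℝ)} (hS : MeasurableSet S)
    {T R : ℝ} (hT : ∀ Q, ipr (Y - θ) (A *ᵥ Q - θ) ≤ T * enr (A *ᵥ Q - θ))
    (hR : ∀ Q ∈ S, R ≤ enr (A *ᵥ Q - θ) ^ 2) :
    evidence A lam Y S ≤ sigDensity lam Y θ *
      Real.exp (2 * T ^ 2 + 2 * lam ^ 2 + 3 * lam * Fintype.card κ - R / 8) := by
  rcases (gramDet_nonneg A).eq_or_lt' with hA | hA
  · rw [evidence_of_gramDet_eq_zero hA]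
    exact mul_nonneg (sigDensity_pos _ _ _).le (Real.exp_pos _).le
  obtain ⟨c, hc⟩ := setIntegral_sigDensity_le hA hlam hS hT hR
  set d := Fintype.card κ
  set C := sigDensity lam Y θ * Real.exp (2 * T ^ 2 + 2 * lam ^ 2 - R / 8) with hCdef
  have hC : 0 ≤ C := mul_nonneg (sigDensity_pos _ _ _).le (Real.exp_pos _).le
  have hpow : (lam / √(1 / 8)) ^ d ≤ Real.exp (3 * lam * d) := by
    have hsqrt : 1 / 3 ≤ √(1 / 8) := Real.le_sqrt_of_sq_le (by norm_num)
    rw [mul_comm _ (d : ℝ), Real.exp_nat_mul]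
    refine pow_le_pow_left₀ (by positivity) ?_ d
    calc lam / √(1 / 8) ≤ lam / (1 / 3) := by gcongr
      _ = 3 * lam := by ring
      _ ≤ Real.exp (3 * lam) := (le_add_of_nonneg_right zero_le_one).trans (Real.add_one_le_exp _)
  calc evidence A lam Y S
      ≤ √(gramDet A) * (lam / √π) ^ d *
          (C * ∫ Q, Real.exp (-(1 / 8) * enr (A *ᵥ (Q - c)) ^ 2)) := by
        rw [evidence]
        gcongr
    _ = C * (lam / √(1 / 8)) ^ d := by
        rw [mul_left_comm,
          normalisation_mul_integral_exp_neg_mul_enr_mulVec_sq hA lam (by norm_num) c]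
    _ ≤ C * Real.exp (3 * lam * d) := by gcongr
    _ = sigDensity lam Y θ * Real.exp (2 * T ^ 2 + 2 * lam ^ 2 + 3 * lam * d - R / 8) := by
        rw [hCdef, mul_assoc, ← Real.exp_add]
        ring_nf

end Evidence

section PosteriorContraction

variable {Θ N ι : Type*} [Fintype N] [Fintype ι] {κ : ι → Type*} [∀ i, Fintype (κ i)]

section Posterior

variable [∀ i, DecidableEq (κ i)] {w : ι → ℝ} {lam : ℝ}

lemma gpostP_eq_div (w : ι → ℝ) (A : (i : ι) → Matrix N (κ i) ℝ) (emb : (i : ι) → (κ i → ℝ) → Θ)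
    (lam : ℝ) (Y : N → ℝ) (Sel : Set ι) (U : Set Θ) :
    gpostP w A emb lam Y Sel U =
      (∑ i, (if i ∈ Sel then w i else 0) * evidence (A i) lam Y {Q | emb i Q ∈ U}) /
        ∑ i, w i * evidence (A i) lam Y Set.univ := by
  simp only [gpostP, evidence, setIntegral_univ, ← mul_assoc]
  rfl

lemma gpostP_nonneg (hw : ∀ i, 0 ≤ w i) (hlam : 0 ≤ lam) (A : (i : ι) → Matrix N (κ i) ℝ)
    (emb : (i : ι) → (κ i → ℝ) → Θ) (Y : N → ℝ) (Sel : Set ι) (U : Set Θ) :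
    0 ≤ gpostP w A emb lam Y Sel U := by
  rw [gpostP_eq_div]
  refine div_nonneg (Finset.sum_nonneg fun i _ => mul_nonneg ?_ (evidence_nonneg hlam _ _ _))
    (Finset.sum_nonneg fun i _ => mul_nonneg (hw i) (evidence_nonneg hlam _ _ _))
  exact ite_nonneg (hw i) le_rfl

lemma gpostP_le_one (hw : ∀ i, 0 ≤ w i) (hlam : 0 ≤ lam) (A : (i : ι) → Matrix N (κ i) ℝ)
    (emb : (i : ι) → (κ i → ℝ) → Θ) (Y : N → ℝ) (Sel : Set ι) (U : Set Θ) :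
    gpostP w A emb lam Y Sel U ≤ 1 := by
  rw [gpostP_eq_div]
  refine div_le_one_of_le₀ (Finset.sum_le_sum fun i _ => ?_)
    (Finset.sum_nonneg fun i _ => mul_nonneg (hw i) (evidence_nonneg hlam _ _ _))
  refine mul_le_mul ?_ (evidence_le_evidence_univ hlam _ _ _) (evidence_nonneg hlam _ _ _) (hw i)
  split_ifs
  exacts [le_rfl, hw i]

end Posterior

/-- `x i` is the complexity of model `i` and `v i` the prior weight of model `i` among the models of
its complexity class. The model prior is proportional to
`exp (-D * x i) * v i`. -/
structure IsModelComplexity (κ : ι → Type*) [∀ i, Fintype (κ i)] (v x : ι → ℝ) : Prop where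
  one_le : ∀ i, 1 ≤ x i
  card_le : ∀ i, (Fintype.card (κ i) : ℝ) ≤ x i
  exp_neg_le : ∀ i, Real.exp (-x i) ≤ v i
  sum_le_one : ∑ i, Real.exp (-2 * x i) * v i ≤ 1

variable {v x : ι → ℝ} {A : (i : ι) → Matrix N (κ i) ℝ} {θ : N → ℝ} {ρ s : ℝ}

lemma IsModelComplexity.weight_nonneg (hx : IsModelComplexity κ v x) (i : ι) : 0 ≤ v i :=
  (Real.exp_pos _).le.trans (hx.exp_neg_le i)

/-- The noise `W` has correlation of order at most the square root of the complexity with every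
deviation from `θ`, simultaneously in all models. -/
def NoiseBound (A : (i : ι) → Matrix N (κ i) ℝ) (x : ι → ℝ) (K s : ℝ) (θ W : N → ℝ) : Prop :=
  ∀ i Q, ipr W (A i *ᵥ Q - θ) ≤ √(K * (x i + s)) * enr (A i *ᵥ Q - θ)

section NoiseProbability

variable {Ω : Type*} [MeasurableSpace Ω] {P : Measure Ω} {W : Ω → N → ℝ}

lemma finrank_range_sup_span_singleton_le {R E F : Type*} [DivisionRing R] [AddCommGroup E]
    [Module R E] [FiniteDimensional R E] [AddCommGroup F] [Module R F] (f : E →ₗ[R] F) (θ : F) :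
    Module.finrank R ↥(LinearMap.range f ⊔ Submodule.span R {θ}) ≤ Module.finrank R E + 1 := by
  refine (Submodule.finrank_add_le_finrank_add_finrank _ _).trans
    (add_le_add (LinearMap.finrank_range_le f) ?_)
  simpa using finrank_span_le_card (R := R) {θ}

lemma five_pow_mul_exp_neg_le {d : ℕ} {y s : ℝ} (hd : (d : ℝ) ≤ y) (hs : 1 ≤ s) :
    5 ^ (d + 1) * Real.exp (-5 * (y + s)) ≤ Real.exp (-3 * y) * Real.exp (-2 * s) := by
  have h5 : (5 : ℝ) ≤ Real.exp 2 := by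
    have h := Real.quadratic_le_exp_of_nonneg (zero_le_two (α := ℝ))
    linarith
  calc 5 ^ (d + 1) * Real.exp (-5 * (y + s))
      ≤ Real.exp 2 ^ (d + 1) * Real.exp (-5 * (y + s)) := by gcongr
    _ = Real.exp (((d + 1 : ℕ) : ℝ) * 2 + -5 * (y + s)) := by rw [Real.exp_add, Real.exp_nat_mul]
    _ ≤ Real.exp (-3 * y + -2 * s) := by
        rw [Real.exp_le_exp]
        push_cast
        linarith
    _ = Real.exp (-3 * y) * Real.exp (-2 * s) := Real.exp_add _ _

lemma subG.measure_exists_range_le (hW : subG P ρ W) (hρ : 0 < ρ) {κ : Type*} [Fintype κ]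
    (A : Matrix N κ ℝ) (θ : N → ℝ) {y : ℝ} (hy : Fintype.card κ ≤ y) (hs : 1 ≤ s) :
    P {ω | ∃ Q, √(40 / ρ * (y + s)) * enr (A *ᵥ Q - θ) < ipr (W ω) (A *ᵥ Q - θ)} ≤
      ENNReal.ofReal (Real.exp (-3 * y) * Real.exp (-2 * s)) := by
  have hT : 0 < 40 / ρ * (y + s) := by
    have : (0 : ℝ) ≤ Fintype.card κ := Nat.cast_nonneg _
    exact mul_pos (by positivity) (by linarith)
  let S := LinearMap.range (Matrix.toEuclideanLin A) ⊔ Submodule.span ℝ {WithLp.toLp 2 θ}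
  have hS (Q : κ → ℝ) : WithLp.toLp 2 (A *ᵥ Q - θ) ∈ S :=
    sub_mem (Submodule.mem_sup_left (LinearMap.mem_range.mpr ⟨WithLp.toLp 2 Q, rfl⟩))
      (Submodule.mem_sup_right (Submodule.mem_span_singleton_self _))
  have hexp : -ρ * √(40 / ρ * (y + s)) ^ 2 / 8 = -5 * (y + s) := by
    rw [Real.sq_sqrt hT.le]
    field_simp
    ring
  calc P {ω | ∃ Q, √(40 / ρ * (y + s)) * enr (A *ᵥ Q - θ) < ipr (W ω) (A *ᵥ Q - θ)}
      ≤ P {ω | ∃ u, WithLp.toLp 2 u ∈ S ∧ √(40 / ρ * (y + s)) * enr u < ipr (W ω) u} :=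
        measure_mono fun ω ⟨Q, hQ⟩ => ⟨A *ᵥ Q - θ, hS Q, hQ⟩
    _ ≤ 5 ^ Module.finrank ℝ S * ENNReal.ofReal (Real.exp (-5 * (y + s))) := by
        rw [← hexp]
        exact hW.measure_exists_mem_submodule_le S (Real.sqrt_pos.mpr hT)
    _ ≤ 5 ^ (Fintype.card κ + 1) * ENNReal.ofReal (Real.exp (-5 * (y + s))) := by
        gcongr
        · norm_num
        · rw [← finrank_euclideanSpace (𝕜 := ℝ) (ι := κ)]
          exact finrank_range_sup_span_singleton_le (Matrix.toEuclideanLin A) _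
    _ = ENNReal.ofReal (5 ^ (Fintype.card κ + 1) * Real.exp (-5 * (y + s))) := by
        rw [ENNReal.ofReal_mul (by positivity), ENNReal.ofReal_pow (by norm_num),
          ENNReal.ofReal_ofNat]
    _ ≤ ENNReal.ofReal (Real.exp (-3 * y) * Real.exp (-2 * s)) :=
        ENNReal.ofReal_le_ofReal (five_pow_mul_exp_neg_le hy hs)

lemma IsModelComplexity.sum_exp_neg_three_mul_le_one (hx : IsModelComplexity κ v x) :
    ∑ i, Real.exp (-3 * x i) ≤ 1 := by
  refine le_trans (Finset.sum_le_sum fun i _ => ?_) hx.sum_le_one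
  calc Real.exp (-3 * x i) = Real.exp (-2 * x i) * Real.exp (-x i) := by
        rw [← Real.exp_add]
        ring_nf
    _ ≤ Real.exp (-2 * x i) * v i := by
        gcongr
        exact hx.exp_neg_le i

lemma subG.measureReal_not_noiseBound_le (hW : subG P ρ W) (hρ : 0 < ρ)
    (hx : IsModelComplexity κ v x) (A : (i : ι) → Matrix N (κ i) ℝ) (θ : N → ℝ) (hs : 1 ≤ s) :
    P.real {ω | ¬ NoiseBound A x (40 / ρ) s θ (W ω)} ≤ Real.exp (-2 * s) := by
  refine ENNReal.toReal_le_of_le_ofReal (Real.exp_pos _).le ?_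
  calc P {ω | ¬ NoiseBound A x (40 / ρ) s θ (W ω)}
      = P (⋃ i, {ω | ∃ Q, √(40 / ρ * (x i + s)) * enr (A i *ᵥ Q - θ) <
          ipr (W ω) (A i *ᵥ Q - θ)}) := by
        congr 1
        ext ω
        simp only [NoiseBound, Set.mem_ofPred_eq, Set.mem_iUnion, not_forall, not_le]
    _ ≤ ∑ i, ENNReal.ofReal (Real.exp (-3 * x i) * Real.exp (-2 * s)) :=
        (measure_iUnion_fintype_le _ _).trans <| Finset.sum_le_sum fun i _ =>
          hW.measure_exists_range_le hρ (A i) θ (hx.card_le i) hs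
    _ = ENNReal.ofReal ((∑ i, Real.exp (-3 * x i)) * Real.exp (-2 * s)) := by
        rw [Finset.sum_mul, ENNReal.ofReal_sum_of_nonneg fun i _ => by positivity]
    _ ≤ ENNReal.ofReal (Real.exp (-2 * s)) := ENNReal.ofReal_le_ofReal <|
        mul_le_of_le_one_left (Real.exp_pos _).le hx.sum_exp_neg_three_mul_le_one

end NoiseProbability

/-- The threshold governing how strongly the prior has to penalise complexity; it collects the
constants of the noise bound, of the Laplace prior and of the union over the models. -/
noncomputable def slack (lam ρ : ℝ) : ℝ := 160 / ρ + 5 / 2 * lam ^ 2 + 3 * lam + 1 / lam + 5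

lemma slack_pos {lam ρ : ℝ} (hlam : 0 < lam) (hρ : 0 < ρ) : 0 < slack lam ρ := by
  unfold slack
  positivity

lemma slack_mul (lam ρ y : ℝ) : slack lam ρ * y =
    4 * (40 / ρ * y) + 5 / 2 * (lam ^ 2 * y) + 3 * lam * y + y / lam + 5 * y := by
  unfold slack
  ring

section PosteriorBound

variable [∀ i, DecidableEq (κ i)] {emb : (i : ι) → (κ i → ℝ) → Θ} {D lam K : ℝ} {W : N → ℝ}

lemma le_sum_evidence (hx : IsModelComplexity κ v x) (hlam : 0 < lam) (hD : -1 ≤ D) {i₀ : ι}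
    (hA : 0 < gramDet (A i₀)) (hs : x i₀ ≤ s) (Q₀ : κ i₀ → ℝ) (Y : N → ℝ) :
    sigDensity lam Y (A i₀ *ᵥ Q₀) * Real.exp (-((D + 1) * s + lam ^ 2 / 2 + s / lam)) ≤
      ∑ i, Real.exp (-D * x i) * v i * evidence (A i) lam Y Set.univ := by
  have hw : Real.exp (-(D + 1) * s) ≤ Real.exp (-D * x i₀) * v i₀ := by
    calc Real.exp (-(D + 1) * s) ≤ Real.exp (-D * x i₀ + -x i₀) := by
          rw [Real.exp_le_exp]
          nlinarith
      _ ≤ Real.exp (-D * x i₀) * v i₀ := by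
          rw [Real.exp_add]
          gcongr
          exact hx.exp_neg_le i₀
  have hcard : Fintype.card (κ i₀) / lam ≤ s / lam := by
    gcongr
    exact (hx.card_le i₀).trans hs
  have hσ := (sigDensity_pos lam Y (A i₀ *ᵥ Q₀)).le
  calc sigDensity lam Y (A i₀ *ᵥ Q₀) * Real.exp (-((D + 1) * s + lam ^ 2 / 2 + s / lam))
      ≤ Real.exp (-(D + 1) * s) * (sigDensity lam Y (A i₀ *ᵥ Q₀) *
          Real.exp (-(lam ^ 2 / 2) - Fintype.card (κ i₀) / lam)) := by
        rw [mul_left_comm, ← Real.exp_add]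
        refine mul_le_mul_of_nonneg_left (Real.exp_le_exp.mpr ?_) hσ
        linarith
    _ ≤ Real.exp (-D * x i₀) * v i₀ * evidence (A i₀) lam Y Set.univ := by
        exact mul_le_mul hw (le_evidence hA hlam Y Q₀) (by positivity)
          (mul_nonneg (Real.exp_pos _).le (hx.weight_nonneg i₀))
    _ ≤ ∑ i, Real.exp (-D * x i) * v i * evidence (A i) lam Y Set.univ :=
        Finset.single_le_sum
          (f := fun i => Real.exp (-D * x i) * v i * evidence (A i) lam Y Set.univ)
          (fun i _ => mul_nonneg (mul_nonneg (Real.exp_pos _).le (hx.weight_nonneg i))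
            (evidence_nonneg hlam.le _ _ _)) (Finset.mem_univ i₀)

lemma sum_evidence_le (hx : IsModelComplexity κ v x) (hlam : 0 ≤ lam) (hK : 0 ≤ K) (hs : 0 ≤ s)
    {Y : N → ℝ} (hnoise : NoiseBound A x K s θ (Y - θ)) {S : (i : ι) → Set (κ i → ℝ)}
    (hS : ∀ i, MeasurableSet (S i)) {R : ℝ} (hR : ∀ i, ∀ Q ∈ S i, R ≤ enr (A i *ᵥ Q - θ) ^ 2)
    {Sel : Set ι} {E : ℝ}
    (hE : ∀ i ∈ Sel,
      2 * K * (x i + s) + 2 * lam ^ 2 + 3 * lam * x i - R / 8 + E ≤ (D - 2) * x i) :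
    ∑ i, (if i ∈ Sel then Real.exp (-D * x i) * v i else 0) * evidence (A i) lam Y (S i) ≤
      sigDensity lam Y θ * Real.exp (-E) := by
  have hσ := sigDensity_pos lam Y θ
  have hterm (i : ι) : (if i ∈ Sel then Real.exp (-D * x i) * v i else 0) *
      evidence (A i) lam Y (S i) ≤
        Real.exp (-2 * x i) * v i * (sigDensity lam Y θ * Real.exp (-E)) := by
    have hv := hx.weight_nonneg i
    split_ifs with hi
    swap
    · rw [zero_mul]
      positivity
    have hexp : Real.exp (-D * x i) * Real.exp (2 * √(K * (x i + s)) ^ 2 + 2 * lam ^ 2 +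
        3 * lam * Fintype.card (κ i) - R / 8) ≤ Real.exp (-2 * x i) * Real.exp (-E) := by
      rw [← Real.exp_add, ← Real.exp_add, Real.exp_le_exp,
        Real.sq_sqrt (mul_nonneg hK (by linarith [hx.one_le i]))]
      linarith [hE i hi, mul_le_mul_of_nonneg_left (hx.card_le i) hlam]
    calc Real.exp (-D * x i) * v i * evidence (A i) lam Y (S i)
        ≤ Real.exp (-D * x i) * v i * (sigDensity lam Y θ *
            Real.exp (2 * √(K * (x i + s)) ^ 2 + 2 * lam ^ 2 + 3 * lam * Fintype.card (κ i) -
              R / 8)) := by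
          gcongr
          exact evidence_le hlam (hS i) (hnoise i) (hR i)
      _ = v i * sigDensity lam Y θ * (Real.exp (-D * x i) *
            Real.exp (2 * √(K * (x i + s)) ^ 2 + 2 * lam ^ 2 + 3 * lam * Fintype.card (κ i) -
              R / 8)) := by ring
      _ ≤ v i * sigDensity lam Y θ * (Real.exp (-2 * x i) * Real.exp (-E)) := by gcongr
      _ = Real.exp (-2 * x i) * v i * (sigDensity lam Y θ * Real.exp (-E)) := by ring
  refine (Finset.sum_le_sum fun i _ => hterm i).trans ?_
  rw [← Finset.sum_mul]
  exact mul_le_of_le_one_left (by positivity) hx.sum_le_one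

lemma gpostP_le_exp (hx : IsModelComplexity κ v x) (hlam : 0 < lam) (hK : 0 ≤ K) (hs : 0 ≤ s)
    (hD : -1 ≤ D) {i₀ : ι} (hA : 0 < gramDet (A i₀)) (hi₀ : x i₀ ≤ s) {Q₀ : κ i₀ → ℝ}
    (hθ : A i₀ *ᵥ Q₀ = θ) {Y : N → ℝ} (hnoise : NoiseBound A x K s θ (Y - θ)) {U : Set Θ}
    (hU : ∀ i, MeasurableSet {Q | emb i Q ∈ U}) {R : ℝ}
    (hR : ∀ i Q, emb i Q ∈ U → R ≤ enr (A i *ᵥ Q - θ) ^ 2) {Sel : Set ι}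
    (hbudget : ∀ i ∈ Sel, 2 * K * (x i + s) + 2 * lam ^ 2 + 3 * lam * x i - R / 8 +
      ((D + 3) * s + lam ^ 2 / 2 + s / lam) ≤ (D - 2) * x i) :
    gpostP (fun i => Real.exp (-D * x i) * v i) A emb lam Y Sel U ≤ Real.exp (-2 * s) := by
  rw [gpostP_eq_div]
  have hden := le_sum_evidence hx hlam hD hA hi₀ Q₀ Y
  rw [hθ] at hden
  have hσ := sigDensity_pos lam Y θ
  rw [div_le_iff₀ (lt_of_lt_of_le (by positivity) hden)]
  calc _ ≤ sigDensity lam Y θ * Real.exp (-((D + 3) * s + lam ^ 2 / 2 + s / lam)) :=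
        sum_evidence_le hx hlam.le hK hs hnoise hU hR hbudget
    _ = Real.exp (-2 * s) * (sigDensity lam Y θ *
          Real.exp (-((D + 1) * s + lam ^ 2 / 2 + s / lam))) := by
        rw [mul_left_comm, ← Real.exp_add]
        ring_nf
    _ ≤ _ := by gcongr

end PosteriorBound

section Contraction

variable [∀ i, DecidableEq (κ i)] {emb : (i : ι) → (κ i → ℝ) → Θ} {D lam : ℝ}
  {Ω : Type*} [MeasurableSpace Ω] {P : Measure Ω} [IsProbabilityMeasure P] {W : Ω → N → ℝ}

lemma integral_gpostP_le (hW : subG P ρ W) (hρ : 0 < ρ) (hlam : 0 < lam)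
    (hx : IsModelComplexity κ v x) (hD : -1 ≤ D) {i₀ : ι} (hA : 0 < gramDet (A i₀))
    {Q₀ : κ i₀ → ℝ} (hθ : A i₀ *ᵥ Q₀ = θ) (hi₀ : x i₀ ≤ s) {U : Set Θ}
    (hU : ∀ i, MeasurableSet {Q | emb i Q ∈ U}) {R : ℝ}
    (hR : ∀ i Q, emb i Q ∈ U → R ≤ enr (A i *ᵥ Q - θ) ^ 2) {Sel : Set ι}
    (hbudget : ∀ i ∈ Sel, 2 * (40 / ρ) * (x i + s) + 2 * lam ^ 2 + 3 * lam * x i - R / 8 +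
      ((D + 3) * s + lam ^ 2 / 2 + s / lam) ≤ (D - 2) * x i) :
    ∫ ω, gpostP (fun i => Real.exp (-D * x i) * v i) A emb lam (θ + W ω) Sel U ∂P ≤
      Real.exp (-s) := by
  have hs : 1 ≤ s := (hx.one_le i₀).trans hi₀
  have hw (i : ι) : 0 ≤ Real.exp (-D * x i) * v i :=
    mul_nonneg (Real.exp_pos _).le (hx.weight_nonneg i)
  have hgood : ∀ ω ∉ {ω | ¬ NoiseBound A x (40 / ρ) s θ (W ω)},
      gpostP (fun i => Real.exp (-D * x i) * v i) A emb lam (θ + W ω) Sel U ≤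
        Real.exp (-2 * s) := fun ω hω => by
    refine gpostP_le_exp hx hlam (by positivity) (by linarith) hD hA hi₀ hθ ?_ hU hR hbudget
    rw [add_sub_cancel_left]
    exact not_not.mp hω
  calc _ ≤ P.real {ω | ¬ NoiseBound A x (40 / ρ) s θ (W ω)} + Real.exp (-2 * s) :=
        integral_le_measureReal_add P (Real.exp_pos _).le
          (fun _ => gpostP_nonneg hw hlam.le A emb _ Sel U)
          (fun _ => gpostP_le_one hw hlam.le A emb _ Sel U) hgood
    _ ≤ 2 * Real.exp (-2 * s) := by
        linarith [hW.measureReal_not_noiseBound_le hρ hx A θ hs]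
    _ ≤ Real.exp s * Real.exp (-2 * s) := by
        gcongr
        linarith [Real.add_one_le_exp s]
    _ = Real.exp (-s) := by
        rw [← Real.exp_add]
        ring_nf

theorem integral_gpostP_complexity_le (hW : subG P ρ W) (hρ : 0 < ρ) (hlam : 0 < lam)
    (hx : IsModelComplexity κ v x) {δ : ℝ} (hδ : 0 < δ) (hD : slack lam ρ * (1 + 1 / δ) ≤ D)
    {i₀ : ι} (hA : 0 < gramDet (A i₀)) {Q₀ : κ i₀ → ℝ} (hθ : A i₀ *ᵥ Q₀ = θ) (hi₀ : x i₀ ≤ s) :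
    ∫ ω, gpostP (fun i => Real.exp (-D * x i) * v i) A emb lam (θ + W ω)
      {i | (1 + δ) * s < x i} Set.univ ∂P ≤ Real.exp (-s) := by
  have hB := slack_pos hlam hρ
  have hD₀ : 0 ≤ D := le_trans (by positivity) hD
  refine integral_gpostP_le hW hρ hlam hx (by linarith) hA hθ hi₀ (R := 0)
    (fun i => by simp) (fun i Q _ => sq_nonneg _) fun i (hi : (1 + δ) * s < x i) => ?_
  have hs : 1 ≤ s := (hx.one_le i₀).trans hi₀
  have hsx : s ≤ x i := by nlinarith
  have hgap : slack lam ρ * x i ≤ D * (x i - s) := by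
    calc slack lam ρ * x i ≤ slack lam ρ * ((1 + 1 / δ) * (x i - s)) := by
          gcongr
          field_simp
          linarith
      _ ≤ D * (x i - s) := by
          rw [← mul_assoc]
          exact mul_le_mul_of_nonneg_right hD (sub_nonneg.mpr hsx)
  have hK := mul_le_mul_of_nonneg_left hsx (show 0 ≤ 40 / ρ by positivity)
  have hL : s / lam ≤ x i / lam := by gcongr
  have hsq := le_mul_of_one_le_right (sq_nonneg lam) (hs.trans hsx)
  linarith [slack_mul lam ρ (x i)]

theorem integral_gpostP_loss_le (hW : subG P ρ W) (hρ : 0 < ρ) (hlam : 0 < lam)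
    (hx : IsModelComplexity κ v x) (hD : slack lam ρ ≤ D) {i₀ : ι} (hA : 0 < gramDet (A i₀))
    {Q₀ : κ i₀ → ℝ} (hθ : A i₀ *ᵥ Q₀ = θ) (hi₀ : x i₀ ≤ s) {U : Set Θ}
    (hU : ∀ i, MeasurableSet {Q | emb i Q ∈ U})
    (hR : ∀ i Q, emb i Q ∈ U → 8 * (D + slack lam ρ) * s ≤ enr (A i *ᵥ Q - θ) ^ 2) :
    ∫ ω, gpostP (fun i => Real.exp (-D * x i) * v i) A emb lam (θ + W ω) Set.univ U ∂P ≤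
      Real.exp (-s) := by
  have hB := slack_pos hlam hρ
  refine integral_gpostP_le hW hρ hlam hx (by linarith) hA hθ hi₀ hU hR fun i _ => ?_
  have hs : 1 ≤ s := (hx.one_le i₀).trans hi₀
  have hx₀ : 0 ≤ x i := zero_le_one.trans (hx.one_le i)
  have hDx := mul_le_mul_of_nonneg_right hD hx₀
  have hK : 0 ≤ 40 / ρ * x i := by positivity
  have hK' : 0 ≤ 40 / ρ * s := by positivity
  have hL : 0 ≤ x i / lam := by positivity
  have hsq := le_mul_of_one_le_right (sq_nonneg lam) hs
  have hsq' : 0 ≤ lam ^ 2 * x i := by positivity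
  have hlin : 0 ≤ lam * s := by positivity
  linarith [slack_mul lam ρ (x i), slack_mul lam ρ s]

end Contraction

end PosteriorContraction

section Biclustering

/-- The rate `kl + n log k + m log l` of an `n × m` array with `k` row and `l` column clusters. -/
noncomputable def bicRate (n m k l : ℕ) : ℝ :=
  (k : ℝ) * (l : ℝ) + (n : ℝ) * Real.log k + (m : ℝ) * Real.log l

/-- The biclustering models `(k, l, z₁, z₂)`. As in `bicPost`, the numbers of clusters are encoded
by their predecessors, so that the model `⟨(a, b), _⟩` has `k = a + 1` and `l = b + 1`. -/
abbrev BicModel (n m : ℕ) : Type :=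
  Σ kl : Fin n × Fin m, (Fin n → Fin ((kl.1 : ℕ) + 1)) × (Fin m → Fin ((kl.2 : ℕ) + 1))

variable {n m k l : ℕ}

lemma mul_le_bicRate (n m k l : ℕ) : (k : ℝ) * l ≤ bicRate n m k l := by
  have := mul_nonneg n.cast_nonneg (Real.log_natCast_nonneg k)
  have := mul_nonneg m.cast_nonneg (Real.log_natCast_nonneg l)
  unfold bicRate
  linarith

lemma bicRate_mono {k' l' : ℕ} (hk : 1 ≤ k) (hkk' : k ≤ k') (hl : 1 ≤ l) (hll' : l ≤ l') :
    bicRate n m k l ≤ bicRate n m k' l' := by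
  unfold bicRate
  gcongr

lemma exp_neg_bicRate_le (hk : 1 ≤ k) (hl : 1 ≤ l) :
    Real.exp (-bicRate n m k l) ≤ ((k : ℝ) ^ n * (l : ℝ) ^ m)⁻¹ := by
  have hk' : (0 : ℝ) < k := by exact_mod_cast hk
  have hl' : (0 : ℝ) < l := by exact_mod_cast hl
  rw [Real.exp_neg]
  refine inv_anti₀ (by positivity) ?_
  calc (k : ℝ) ^ n * (l : ℝ) ^ m = Real.exp (n * Real.log k + m * Real.log l) := by
        rw [Real.exp_add, Real.exp_nat_mul, Real.exp_nat_mul, Real.exp_log hk', Real.exp_log hl']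
    _ ≤ Real.exp (bicRate n m k l) := by
        rw [Real.exp_le_exp, bicRate, add_assoc]
        exact le_add_of_nonneg_left (by positivity)

lemma exp_neg_two_mul_bicRate_le (hk : 1 ≤ k) (hl : 1 ≤ l) :
    Real.exp (-2 * bicRate n m k l) ≤ (1 / 2) ^ k * (1 / 2) ^ l := by
  have hk' : (1 : ℝ) ≤ k := by exact_mod_cast hk
  have hl' : (1 : ℝ) ≤ l := by exact_mod_cast hl
  have hexp : Real.exp (-1) ≤ 1 / 2 := by linarith [Real.exp_neg_one_lt_half]
  calc Real.exp (-2 * bicRate n m k l) ≤ Real.exp (k * -1 + l * -1) := by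
        rw [Real.exp_le_exp]
        nlinarith [mul_le_bicRate n m k l]
    _ = Real.exp (-1) ^ k * Real.exp (-1) ^ l := by
        rw [Real.exp_add, Real.exp_nat_mul, Real.exp_nat_mul]
    _ ≤ (1 / 2) ^ k * (1 / 2) ^ l := by gcongr

lemma sum_half_pow_succ_le_one (n : ℕ) : ∑ a : Fin n, (1 / 2 : ℝ) ^ ((a : ℕ) + 1) ≤ 1 := by
  rw [Fin.sum_univ_eq_sum_range fun a => (1 / 2 : ℝ) ^ (a + 1)]
  simp only [pow_succ, ← Finset.sum_mul]
  linarith [sum_geometric_two_le n]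

lemma sum_exp_neg_two_mul_bicRate_le_one (n m : ℕ) :
    ∑ ab : Fin n × Fin m, Real.exp (-2 * bicRate n m (ab.1 + 1) (ab.2 + 1)) ≤ 1 := by
  calc ∑ ab : Fin n × Fin m, Real.exp (-2 * bicRate n m (ab.1 + 1) (ab.2 + 1))
      ≤ ∑ ab : Fin n × Fin m, (1 / 2 : ℝ) ^ ((ab.1 : ℕ) + 1) * (1 / 2) ^ ((ab.2 : ℕ) + 1) :=
        Finset.sum_le_sum fun ab _ =>
          exp_neg_two_mul_bicRate_le (Nat.le_add_left _ _) (Nat.le_add_left _ _)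
    _ = (∑ a : Fin n, (1 / 2 : ℝ) ^ ((a : ℕ) + 1)) * ∑ b : Fin m, (1 / 2) ^ ((b : ℕ) + 1) := by
        rw [Finset.sum_mul_sum, Fintype.sum_prod_type]
    _ ≤ 1 := mul_le_one₀ (sum_half_pow_succ_le_one n)
        (Finset.sum_nonneg fun _ _ => by positivity) (sum_half_pow_succ_le_one m)

lemma isModelComplexity_bicRate (n m : ℕ) :
    IsModelComplexity (fun i : BicModel n m => Fin ((i.1.1 : ℕ) + 1) × Fin ((i.1.2 : ℕ) + 1))
      (fun i => ((((i.1.1 : ℕ) + 1 : ℕ) : ℝ) ^ n * (((i.1.2 : ℕ) + 1 : ℕ) : ℝ) ^ m)⁻¹)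
      (fun i => bicRate n m (i.1.1 + 1) (i.1.2 + 1)) where
  one_le i := by
    refine le_trans ?_ (mul_le_bicRate n m _ _)
    exact_mod_cast Nat.mul_pos (Nat.succ_pos i.1.1) (Nat.succ_pos i.1.2)
  card_le i := by
    refine le_trans (le_of_eq ?_) (mul_le_bicRate n m _ _)
    rw [Fintype.card_prod, Fintype.card_fin, Fintype.card_fin, Nat.cast_mul]
  exp_neg_le i := exp_neg_bicRate_le (Nat.le_add_left _ _) (Nat.le_add_left _ _)
  sum_le_one := by
    refine le_trans (le_of_eq ?_) (sum_exp_neg_two_mul_bicRate_le_one n m)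
    rw [Fintype.sum_sigma]
    refine Finset.sum_congr rfl fun ab _ => ?_
    simp only [Finset.sum_const, Finset.card_univ, Fintype.card_prod, Fintype.card_fun,
      Fintype.card_fin, nsmul_eq_mul]
    push_cast
    field_simp

lemma mulVec_bicX (z₁ : Fin n → Fin k) (z₂ : Fin m → Fin l) (Q : Fin k × Fin l → ℝ) :
    bicX n m k l z₁ z₂ *ᵥ Q = fun p => Q (z₁ p.1, z₂ p.2) := by
  ext p
  rw [mulVec, dotProduct, Finset.sum_eq_single (z₁ p.1, z₂ p.2)]
  · simp [bicX]
  · rintro ⟨a, b⟩ - hab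
    have hz : ¬ (z₁ p.1 = a ∧ z₂ p.2 = b) := fun h => hab (Prod.ext h.1.symm h.2.symm)
    simp [bicX, hz]
  · simp

lemma gramDet_bicX_pos {z₁ : Fin n → Fin k} {z₂ : Fin m → Fin l} (hz₁ : Function.Surjective z₁)
    (hz₂ : Function.Surjective z₂) : 0 < gramDet (bicX n m k l z₁ z₂) := by
  refine gramDet_pos_of_injective fun Q Q' hQ => ?_
  simp only [mulVec_bicX] at hQ
  exact (hz₁.prodMap hz₂).injective_comp_right hQ

lemma enr_mulVec_bicX_sub_sq (z₁ : Fin n → Fin k) (z₂ : Fin m → Fin l) (Q : Fin k × Fin l → ℝ)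
    (θ : Fin n → Fin m → ℝ) :
    enr (bicX n m k l z₁ z₂ *ᵥ Q - fun p => θ p.1 p.2) ^ 2 =
      ∑ i, ∑ j, (Q (z₁ i, z₂ j) - θ i j) ^ 2 := by
  rw [enr_sq, Fintype.sum_prod_type, mulVec_bicX]
  rfl

lemma exists_surjective_injective_comp_eq {β : Type*} (hn : 1 ≤ n) (f : Fin n → β) :
    ∃ (a : Fin n) (g : Fin n → Fin ((a : ℕ) + 1)) (h : Fin ((a : ℕ) + 1) → β),
      Function.Surjective g ∧ Function.Injective h ∧ h ∘ g = f := by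
  have : Nonempty (Set.range f) := ⟨⟨_, ⟨0, hn⟩, rfl⟩⟩
  obtain ⟨a, ha⟩ := Nat.exists_eq_add_one.mpr (Nat.card_pos (α := Set.range f))
  have han : a < n := by
    have := Nat.card_le_card_of_surjective _ (Set.rangeFactorization_surjective (f := f))
    rw [ha, Nat.card_fin] at this
    exact this
  let e : Set.range f ≃ Fin (a + 1) := Finite.equivFinOfCardEq ha
  refine ⟨⟨a, han⟩, e ∘ Set.rangeFactorization f, Subtype.val ∘ e.symm,
    e.surjective.comp Set.rangeFactorization_surjective,
    Subtype.val_injective.comp e.symm.injective, ?_⟩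
  ext i
  simp [Set.rangeFactorization]

-- Discarding the empty clusters makes the label maps surjective, hence the Gram matrix invertible.
lemma exists_bicModel_gramDet_pos (hn : 1 ≤ n) (hm : 1 ≤ m) (Q : Fin k → Fin l → ℝ)
    (z₁ : Fin n → Fin k) (z₂ : Fin m → Fin l) :
    ∃ (i : BicModel n m) (Q₀ : Fin ((i.1.1 : ℕ) + 1) × Fin ((i.1.2 : ℕ) + 1) → ℝ),
      0 < gramDet (bicX n m (i.1.1 + 1) (i.1.2 + 1) i.2.1 i.2.2) ∧
      bicX n m (i.1.1 + 1) (i.1.2 + 1) i.2.1 i.2.2 *ᵥ Q₀ = (fun p => Q (z₁ p.1) (z₂ p.2)) ∧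
      bicRate n m (i.1.1 + 1) (i.1.2 + 1) ≤ bicRate n m k l := by
  obtain ⟨a, g₁, h₁, hg₁, hh₁, rfl⟩ := exists_surjective_injective_comp_eq hn z₁
  obtain ⟨b, g₂, h₂, hg₂, hh₂, rfl⟩ := exists_surjective_injective_comp_eq hm z₂
  refine ⟨⟨(a, b), g₁, g₂⟩, fun q => Q (h₁ q.1) (h₂ q.2), gramDet_bicX_pos hg₁ hg₂,
    mulVec_bicX _ _ _, bicRate_mono (Nat.le_add_left _ _) ?_ (Nat.le_add_left _ _) ?_⟩
  · simpa using Fintype.card_le_of_injective h₁ hh₁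
  · simpa using Fintype.card_le_of_injective h₂ hh₂

theorem biclustering_contraction_general {lam ρ δ D : ℝ} (hlam : 0 < lam) (hρ : 0 < ρ) (hδ : 0 < δ)
    (hD : slack lam ρ * (1 + 1 / δ) ≤ D) {ks ls : ℕ} (hn : 1 ≤ n) (hm : 1 ≤ m)
    {Qs : Fin ks → Fin ls → ℝ} {z₁s : Fin n → Fin ks} {z₂s : Fin m → Fin ls}
    {θs : Fin n → Fin m → ℝ} (hθ : ∀ i j, θs i j = Qs (z₁s i) (z₂s j)) {Ω : Type*}
    [MeasurableSpace Ω] {P : Measure Ω} [IsProbabilityMeasure P] {W : Ω → Fin n × Fin m → ℝ}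
    (hW : subG P ρ W) :
    (∫ ω, bicPost n m D lam (fun p => θs p.1 p.2 + W ω p)
          {kl : ℕ × ℕ | (1 + δ) * bicRate n m ks ls < bicRate n m kl.1 kl.2} Set.univ ∂P
        ≤ Real.exp (-bicRate n m ks ls)) ∧
    (∫ ω, bicPost n m D lam (fun p => θs p.1 p.2 + W ω p) Set.univ
          {θ : Fin n → Fin m → ℝ |
            8 * (D + slack lam ρ) * bicRate n m ks ls < ∑ i, ∑ j, (θ i j - θs i j) ^ 2} ∂P
        ≤ Real.exp (-bicRate n m ks ls)) := by
  obtain rfl : θs = fun i j => Qs (z₁s i) (z₂s j) := funext₂ hθ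
  obtain ⟨i₀, Q₀, hA, hQ₀, hi₀⟩ := exists_bicModel_gramDet_pos hn hm Qs z₁s z₂s
  have hx := isModelComplexity_bicRate n m
  have hD' : slack lam ρ ≤ D :=
    (le_mul_of_one_le_right (slack_pos hlam hρ).le (by simp [hδ.le])).trans hD
  refine ⟨integral_gpostP_complexity_le hW hρ hlam hx hδ hD hA hQ₀ hi₀,
    integral_gpostP_loss_le hW hρ hlam hx hD' hA hQ₀ hi₀ (fun i => ?_) fun i Q hQ => ?_⟩
  · have hloss : Measurable fun Q : Fin ((i.1.1 : ℕ) + 1) × Fin ((i.1.2 : ℕ) + 1) → ℝ =>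
        ∑ a, ∑ b, (Q (i.2.1 a, i.2.2 b) - Qs (z₁s a) (z₂s b)) ^ 2 := by fun_prop
    exact measurableSet_lt measurable_const hloss
  · rw [enr_mulVec_bicX_sub_sq i.2.1 i.2.2 Q fun i j => Qs (z₁s i) (z₂s j)]
    exact hQ.le

end Biclustering

/-- Corollary 3 (posterior contraction for biclustering): the posterior contracts at the
minimax rate `k*l* + n log k* + m log l*`. -/
theorem biclustering_contraction :
    ∀ lam ρ : ℝ, 0 < lam → 0 < ρ →
    ∃ δ₀ : ℝ, 0 < δ₀ ∧ δ₀ ≤ 1 ∧ ∀ δ : ℝ, 0 < δ → δ < δ₀ →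
    ∃ D₀ : ℝ, 0 < D₀ ∧ ∀ D : ℝ, D₀ < D →
    ∃ M C' C'' : ℝ, 0 < M ∧ 0 < C' ∧ 0 < C'' ∧
    ∀ (n m ks ls : ℕ), 1 ≤ ks → ks ≤ n → 1 ≤ ls → ls ≤ m →
    ∀ (Qs : Fin ks → Fin ls → ℝ) (z₁s : Fin n → Fin ks) (z₂s : Fin m → Fin ls)
      (θs : Fin n → Fin m → ℝ), (∀ i j, θs i j = Qs (z₁s i) (z₂s j)) →
    ∀ (Ω : Type) (_ : MeasurableSpace Ω) (P : Measure Ω) (_ : IsProbabilityMeasure P)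
      (W : Ω → Fin n × Fin m → ℝ), subG P ρ W →
    (∫ ω, bicPost n m D lam (fun p => θs p.1 p.2 + W ω p)
          {kl : ℕ × ℕ |
            (1 + δ) * ((ks : ℝ) * (ls : ℝ) + (n : ℝ) * Real.log ks
                + (m : ℝ) * Real.log ls)
              < (kl.1 : ℝ) * (kl.2 : ℝ) + (n : ℝ) * Real.log kl.1
                + (m : ℝ) * Real.log kl.2} Set.univ ∂P
        ≤ Real.exp (-C' * ((ks : ℝ) * (ls : ℝ) + (n : ℝ) * Real.log ks
            + (m : ℝ) * Real.log ls))) ∧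
    (∫ ω, bicPost n m D lam (fun p => θs p.1 p.2 + W ω p) Set.univ
          {θ : Fin n → Fin m → ℝ |
            M * ((ks : ℝ) * (ls : ℝ) + (n : ℝ) * Real.log ks + (m : ℝ) * Real.log ls)
              < ∑ i, ∑ j, (θ i j - θs i j) ^ 2} ∂P
        ≤ Real.exp (-C'' * ((ks : ℝ) * (ls : ℝ) + (n : ℝ) * Real.log ks
            + (m : ℝ) * Real.log ls))) := by
  intro lam ρ hlam hρ
  have hB := slack_pos hlam hρ
  refine ⟨1, one_pos, le_rfl, fun δ hδ _ =>
    ⟨slack lam ρ * (1 + 1 / δ), by positivity, fun D hD => ?_⟩⟩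
  have hD₀ : 0 < D := lt_trans (by positivity) hD
  refine ⟨8 * (D + slack lam ρ), 1, 1, by positivity, one_pos, one_pos, ?_⟩
  intro n m ks ls hks hkn hls hlm Qs z₁s z₂s θs hθ Ω _ P _ W hW
  simpa only [neg_one_mul, bicRate] using biclustering_contraction_general hlam hρ hδ hD.le
    (hks.trans hkn) (hls.trans hlm) hθ hW
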